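/- Let E be a real normed vector space and η : E → ℝ a continuous linear functional. Define the Weyl function W(η) : E → ℂ by W(η)(ψ) = exp(i·η(ψ)). Then W(η) is infinitely Fréchet differentiable (ContDiff of every order), and for every n ∈ ℕ and every ψ ∈ E its n-th iterated Fréchet derivative at ψ is the continuous symmetric n-multilinear map (v₁, …, vₙ) ↦ iⁿ · η(v₁)⋯η(vₙ) · exp(i·η(ψ)). -/

import Mathlib

theorem Complex.iteratedDeriv_exp_mul_ofReal (c : ℂ) (n : ℕ) :
    iteratedDeriv n (fun t : ℝ => Complex.exp (c * t)) =
      fun t : ℝ => c ^ n * Complex.exp (c * t) := by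
  induction n with
  | zero => simp
  | succ n ih =>
    ext t
    have h : HasDerivAt (fun s : ℝ => c * (s : ℂ)) c t := by
      simpa using (Complex.ofRealCLM.hasDerivAt (x := t)).const_mul c
    rw [iteratedDeriv_succ, ih, (h.cexp.const_mul (c ^ n)).deriv]
    ring

theorem Complex.contDiff_exp_mul_ofReal (c : ℂ) {n : WithTop ℕ∞} :
    ContDiff ℝ n (fun t : ℝ => Complex.exp (c * t)) :=
  (contDiff_const.mul Complex.ofRealCLM.contDiff).cexp

/-- The Weyl function `W(η)(ψ) = exp(i η(ψ))` is smooth of every order, and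
its `n`-th iterated Fréchet derivative at `ψ` is the continuous symmetric `n`-multilinear
map `(v₁,…,vₙ) ↦ iⁿ η(v₁)⋯η(vₙ) exp(i η(ψ))`. -/
theorem stmt9 {E : Type*} [NormedAddCommGroup E] [NormedSpace ℝ E]
    (η : E →L[ℝ] ℝ) (W : E → ℂ)
    (hW : ∀ ψ, W ψ = Complex.exp (Complex.I * η ψ)) :
    (∀ n : ℕ∞, ContDiff ℝ n W) ∧
    ∀ (n : ℕ) (ψ : E) (v : Fin n → E),
      iteratedFDeriv ℝ n W ψ v =
        Complex.I ^ n * (∏ i, (η (v i) : ℂ)) * Complex.exp (Complex.I * η ψ) := by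
  have hcomp : W = (fun t : ℝ => Complex.exp (Complex.I * t)) ∘ η := funext hW
  have hexp {m : WithTop ℕ∞} := Complex.contDiff_exp_mul_ofReal Complex.I (n := m)
  subst hcomp
  refine ⟨fun n => hexp.comp η.contDiff, fun n ψ v => ?_⟩
  rw [η.iteratedFDeriv_comp_right hexp ψ le_rfl,
    ContinuousMultilinearMap.compContinuousLinearMap_apply,
    iteratedFDeriv_apply_eq_iteratedDeriv_mul_prod, Complex.iteratedDeriv_exp_mul_ofReal,
    Complex.real_smul, Complex.ofReal_prod]
  ring
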